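/- arXiv:math/0506370 — 4 statements merged into one kernel-verified Lean document; each statement's English description precedes it below -/
import Mathlib

section
/- Shuffle relation for iterated integrals (analytic counterpart of Theorem 1, part 2): Let a ≤ b be real numbers, let n, m be natural numbers, and let f₁,…,f_{n+m} : ℝ → ℂ be continuous on [a,b]. Then I(f₁,…,fₙ; a, b) · I(f_{n+1},…,f_{n+m}; a, b) = Σ_{σ ∈ Sh(n,m)} I(f_{σ(1)},…,f_{σ(n+m)}; a, b). -/
/-!
Both sides are integrals of the single function `g s = ∏ k, f k (s k)` over subsets of `ℝ^(n+m)`.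
By Fubini the left side is the integral over the set `A` of points whose first `n` and last `m`
coordinates each lie in the respective simplex (`iterInt_mul_iterInt`). Permuting the coordinates,
the summand indexed by `σ` is the integral over `B σ = {s | s ∘ σ ∈ Δ^(n+m)}` (`iterInt_perm`).

Almost every `s` has pairwise distinct coordinates (`ae_injective`), and for such `s` exactly one
permutation `σ` sorts `s`. Since `s ∘ σ` is then strictly increasing, `σ⁻¹` is increasing on a block
of indices iff `s` is, so `s ∈ A` iff `s ∈ B σ` and `σ` is a shuffle. Hence the indicator of `A` is
almost everywhere the sum of the indicators of the `B σ` over the shuffles `σ`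
(`indicator_blocks_eq_sum`), and integrating `g` against this identity gives the theorem.
-/

open MeasureTheory

/-- The simplex `Δⁿ(a,b) = {t : a ≤ t₁ ≤ … ≤ tₙ ≤ b}` inside `ℝⁿ`. -/
def simplex (n : ℕ) (a b : ℝ) : Set (Fin n → ℝ) :=
  {t | Monotone t ∧ ∀ i, t i ∈ Set.Icc a b}

/-- The iterated integral `I(f₁,…,fₙ; a, b) = ∫_{Δⁿ(a,b)} f₁(t₁)⋯fₙ(tₙ) dt`. -/
noncomputable def iterInt (n : ℕ) (f : Fin n → ℝ → ℂ) (a b : ℝ) : ℂ :=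
  ∫ t in simplex n a b, ∏ i, f i (t i)

open Classical in
/-- The set of `(n,m)`-shuffles: permutations `σ` of `{0,…,n+m-1}` such that
`σ⁻¹` is strictly increasing on the first `n` and on the last `m` indices. -/
noncomputable def shuffles (n m : ℕ) : Finset (Equiv.Perm (Fin (n + m))) :=
  Finset.univ.filter fun σ =>
    StrictMono (fun i : Fin n => σ.symm (Fin.castAdd m i)) ∧
    StrictMono (fun j : Fin m => σ.symm (Fin.natAdd n j))

theorem measurableSet_simplex (n : ℕ) (a b : ℝ) : MeasurableSet (simplex n a b) := by
  have h : simplex n a b =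
      (⋂ i, ⋂ j, ⋂ (_ : i ≤ j), {t : Fin n → ℝ | t i ≤ t j}) ∩ ⋂ i, {t | t i ∈ Set.Icc a b} := by
    ext t
    simp [simplex, Monotone]
  rw [h]
  refine IsClosed.measurableSet (IsClosed.inter ?_ ?_)
  · exact isClosed_iInter fun i => isClosed_iInter fun j => isClosed_iInter fun _ =>
      isClosed_le (continuous_apply i) (continuous_apply j)
  · exact isClosed_iInter fun i => isClosed_Icc.preimage (continuous_apply i)

/-- Almost every point avoids the finitely many hyperplanes `s i = s j` with `i ≠ j`. -/
theorem ae_injective (N : ℕ) : ∀ᵐ s : Fin N → ℝ, Function.Injective s := by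
  have h : ∀ i j : Fin N, i ≠ j → ∀ᵐ s : Fin N → ℝ, s i ≠ s j := by
    intro i j hij
    let p : (Fin N → ℝ) →ₗ[ℝ] ℝ :=
      LinearMap.proj (R := ℝ) (φ := fun _ => ℝ) i - LinearMap.proj (R := ℝ) (φ := fun _ => ℝ) j
    have hp : LinearMap.ker p ≠ ⊤ := by
      intro h
      have h1 : Pi.single i (1 : ℝ) ∈ LinearMap.ker p := h ▸ Submodule.mem_top
      simp [p, hij.symm] at h1
    have h0 := Measure.addHaar_submodule (volume : Measure (Fin N → ℝ)) _ hp
    rw [ae_iff]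
    convert h0 using 2
    ext s
    simp [p, sub_eq_zero]
  have h2 : ∀ᵐ s : Fin N → ℝ, ∀ i j : Fin N, i ≠ j → s i ≠ s j := by
    simp only [ae_all_iff]
    exact h
  filter_upwards [h2] with s hs i j hij
  by_contra hne
  exact hs i j hne hij

/-- Points of `ℝ^(n+m)` whose first `n` and last `m` coordinates lie in the simplices
`Δⁿ(a,b)` and `Δᵐ(a,b)`, that is, the product of the two simplices. -/
def blocks (n m : ℕ) (a b : ℝ) : Set (Fin (n + m) → ℝ) :=
  {s | (fun i => s (Fin.castAdd m i)) ∈ simplex n a b ∧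
    (fun j => s (Fin.natAdd n j)) ∈ simplex m a b}

theorem iterInt_mul_iterInt (a b : ℝ) (n m : ℕ) (f : ℕ → ℝ → ℂ) :
    iterInt n (fun i => f i) a b * iterInt m (fun j => f (n + j)) a b =
      ∫ s, (blocks n m a b).indicator (fun s => ∏ k : Fin (n + m), f k (s k)) s := by
  classical
  have m1 := volume_measurePreserving_sumPiEquivProdPi (fun _ : Fin n ⊕ Fin m => ℝ)
  have m2 := volume_measurePreserving_piCongrLeft (fun _ : Fin (n + m) => ℝ)
    (finSumFinEquiv : Fin n ⊕ Fin m ≃ Fin (n + m))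
  unfold iterInt
  rw [← integral_indicator (measurableSet_simplex n a b),
    ← integral_indicator (measurableSet_simplex m a b), ← integral_prod_mul,
    ← m2.integral_comp']
  refine (m1.integral_comp' _).symm.trans (integral_congr_ae (.of_forall fun u => ?_))
  have hl (i : Fin n) : MeasurableEquiv.piCongrLeft (fun _ : Fin (n + m) => ℝ) finSumFinEquiv u
      (Fin.castAdd m i) = u (Sum.inl i) :=
    MeasurableEquiv.piCongrLeft_apply_apply (β := fun _ : Fin (n + m) => ℝ) finSumFinEquiv u
      (Sum.inl i)
  have hr (j : Fin m) : MeasurableEquiv.piCongrLeft (fun _ : Fin (n + m) => ℝ) finSumFinEquiv u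
      (Fin.natAdd n j) = u (Sum.inr j) :=
    MeasurableEquiv.piCongrLeft_apply_apply (β := fun _ : Fin (n + m) => ℝ) finSumFinEquiv u
      (Sum.inr j)
  simp only [Set.indicator_apply, blocks, Set.mem_ofPred_eq, Fin.prod_univ_add, hl, hr,
    Fin.val_castAdd, Fin.val_natAdd]
  change (if (fun i => u (Sum.inl i)) ∈ _ then ∏ i : Fin n, f i (u (Sum.inl i)) else 0) *
    (if (fun j => u (Sum.inr j)) ∈ _ then ∏ j : Fin m, f (n + j) (u (Sum.inr j)) else 0) = _
  by_cases h1 : (fun i => u (Sum.inl i)) ∈ simplex n a b <;>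
    by_cases h2 : (fun j => u (Sum.inr j)) ∈ simplex m a b <;> simp [h1, h2]

theorem iterInt_perm (a b : ℝ) (N : ℕ) (f : ℕ → ℝ → ℂ) (σ : Equiv.Perm (Fin N)) :
    iterInt N (fun i => f (σ i)) a b =
      ∫ s, {s : Fin N → ℝ | s ∘ σ ∈ simplex N a b}.indicator
        (fun s => ∏ k : Fin N, f k (s k)) s := by
  classical
  have m1 := volume_measurePreserving_piCongrLeft (fun _ : Fin N => ℝ) σ.symm
  unfold iterInt
  rw [← integral_indicator (measurableSet_simplex N a b), ← m1.integral_comp']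
  refine integral_congr_ae (.of_forall fun s => ?_)
  have h : MeasurableEquiv.piCongrLeft (fun _ : Fin N => ℝ) σ.symm s = s ∘ σ := by
    ext k
    have := MeasurableEquiv.piCongrLeft_apply_apply (β := fun _ : Fin N => ℝ) σ.symm s (σ k)
    rwa [Equiv.symm_apply_apply] at this
  simp only [h, Set.indicator_apply, Set.mem_ofPred_eq, Function.comp_apply]
  rw [Equiv.prod_comp σ (fun k => f k (s k))]

/-- Let `σ` sort a point `s` with distinct coordinates. Then `σ⁻¹` orders indices the way `s` orders
its coordinates, so `σ` is a shuffle exactly when both blocks of coordinates of `s` are increasing. -/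
theorem mem_shuffles_iff {n m : ℕ} {a b : ℝ} {s : Fin (n + m) → ℝ} (hs : Function.Injective s)
    {σ : Equiv.Perm (Fin (n + m))} (hσ : Monotone (s ∘ σ)) :
    (σ ∈ shuffles n m ∧ s ∘ σ ∈ simplex (n + m) a b) ↔ s ∈ blocks n m a b := by
  have hst : StrictMono (s ∘ σ) := hσ.strictMono_of_injective (hs.comp σ.injective)
  have key (x y) : σ.symm x < σ.symm y ↔ s x < s y := by
    rw [← hst.lt_iff_lt]; simp
  have hl : StrictMono (fun i : Fin n => σ.symm (Fin.castAdd m i)) ↔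
      Monotone (fun i : Fin n => s (Fin.castAdd m i)) := by
    refine ⟨fun h => StrictMono.monotone fun i j hij => (key _ _).1 (h hij), fun h i j hij => ?_⟩
    exact (key _ _).2
      (h.strictMono_of_injective (hs.comp (Fin.castAdd_injective n m)) hij)
  have hr : StrictMono (fun j : Fin m => σ.symm (Fin.natAdd n j)) ↔
      Monotone (fun j : Fin m => s (Fin.natAdd n j)) := by
    refine ⟨fun h => StrictMono.monotone fun i j hij => (key _ _).1 (h hij), fun h i j hij => ?_⟩
    exact (key _ _).2
      (h.strictMono_of_injective (hs.comp (Fin.natAdd_injective m n)) hij)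
  have hb : (∀ k, (s ∘ σ) k ∈ Set.Icc a b) ↔
      (∀ i : Fin n, s (Fin.castAdd m i) ∈ Set.Icc a b) ∧
        ∀ j : Fin m, s (Fin.natAdd n j) ∈ Set.Icc a b := by
    rw [← Fin.forall_fin_add (fun k => s k ∈ Set.Icc a b)]
    exact σ.forall_congr_left.trans (by simp)
  simp only [shuffles, blocks, simplex, Finset.mem_filter, Finset.mem_univ, true_and,
    Set.mem_ofPred_eq, hl, hr, hb, hσ]
  tauto

theorem indicator_blocks_eq_sum {n m : ℕ} {a b : ℝ} (g : (Fin (n + m) → ℝ) → ℂ)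
    {s : Fin (n + m) → ℝ} (hs : Function.Injective s) :
    (blocks n m a b).indicator g s =
      ∑ σ ∈ shuffles n m, {s | s ∘ σ ∈ simplex (n + m) a b}.indicator g s := by
  by_cases hA : s ∈ blocks n m a b
  · have hsort : Monotone (s ∘ Tuple.sort s) := Tuple.monotone_sort s
    obtain ⟨hSh, hB⟩ := (mem_shuffles_iff hs hsort).2 hA
    rw [Set.indicator_of_mem hA, Finset.sum_eq_single_of_mem _ hSh]
    · exact (Set.indicator_of_mem (by exact hB) g).symm
    refine fun σ _ hne => Set.indicator_of_notMem (fun hmem => hne ?_) _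
    exact Equiv.ext fun k => hs (congrFun (Tuple.unique_monotone hmem.1 hsort) k)
  · rw [Set.indicator_of_notMem hA]
    refine (Finset.sum_eq_zero fun σ hσ => Set.indicator_of_notMem (fun hmem => hA ?_) _).symm
    exact (mem_shuffles_iff hs hmem.1).1 ⟨hσ, hmem⟩

/-- The continuity hypothesis enters here: it makes the common integrand integrable on the compact
cube `[a,b]^N`, which contains every permuted simplex. -/
theorem integrable_indicator_perm (a b : ℝ) (N : ℕ) (f : ℕ → ℝ → ℂ)
    (hf : ∀ i < N, ContinuousOn (f i) (Set.Icc a b)) (σ : Equiv.Perm (Fin N)) :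
    Integrable ({s : Fin N → ℝ | s ∘ σ ∈ simplex N a b}.indicator
      (fun s => ∏ k : Fin N, f k (s k))) := by
  have hm : MeasurableSet {s : Fin N → ℝ | s ∘ σ ∈ simplex N a b} :=
    (measurableSet_simplex N a b).preimage
      (measurable_pi_lambda _ fun k => measurable_pi_apply (σ k))
  rw [integrable_indicator_iff hm]
  have hcube : IntegrableOn (fun s : Fin N → ℝ => ∏ k : Fin N, f k (s k))
      (Set.univ.pi fun _ => Set.Icc a b) := by
    refine ContinuousOn.integrableOn_compact (isCompact_univ_pi fun _ => isCompact_Icc) ?_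
    refine continuousOn_finsetProd _ fun k _ => ?_
    exact (hf k k.2).comp (continuous_apply k).continuousOn fun s hs => hs k trivial
  refine hcube.mono_set fun s hs k _ => ?_
  simpa using hs.2 (σ.symm k)

/-- Shuffle relation for iterated integrals:
`I(f₁,…,fₙ;a,b) ⬝ I(f_{n+1},…,f_{n+m};a,b) = Σ_{σ ∈ Sh(n,m)} I(f_{σ(1)},…,f_{σ(n+m)};a,b)`. -/
theorem iterInt_shuffle (a b : ℝ) (hab : a ≤ b) (n m : ℕ) (f : ℕ → ℝ → ℂ)
    (hf : ∀ i < n + m, ContinuousOn (f i) (Set.Icc a b)) :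
    iterInt n (fun i => f i) a b * iterInt m (fun j => f (n + j)) a b =
      ∑ σ ∈ shuffles n m, iterInt (n + m) (fun i => f (σ i)) a b := by
  simp only [iterInt_perm]
  rw [iterInt_mul_iterInt,
    ← integral_finsetSum _ fun σ _ => integrable_indicator_perm a b (n + m) f hf σ]
  refine integral_congr_ae ?_
  filter_upwards [ae_injective (n + m)] with s hs
  exact indicator_blocks_eq_sum _ hs
end

section
/- Path composition formula for iterated integrals (analytic counterpart of Theorem 1, part 3): Let a ≤ c ≤ b be real numbers and let f₁,…,fₙ : ℝ → ℂ be continuous on [a,b]. Then I(f₁,…,fₙ; a, b) = Σ_{k=0}^{n} I(f₁,…,f_k; a, c) · I(f_{k+1},…,fₙ; c, b). -/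
/-!
The simplex `Δⁿ(a,b)` is cut along the number of coordinates lying to the left of `c`: it is the
union over `k ≤ n` of the closed pieces `{t : t₁ ≤ … ≤ t_k ≤ c ≤ t_{k+1} ≤ … ≤ tₙ}`
(`iUnion_simplexPiece`). Two different pieces meet only inside a hyperplane `tⱼ = c`, hence in a
null set (`aedisjoint_simplexPiece`), and the integrand is continuous on the compact set `Δⁿ(a,b)`,
so the integral over the simplex is the sum of the integrals over the pieces. Splitting the
coordinates into the first `k` and the last `n - k` identifies the `k`-th piece with the product
`Δᵏ(a,c) × Δⁿ⁻ᵏ(c,b)`, over which the integrand factors (`integral_simplexPiece`).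
-/

open MeasureTheory

/-- The part of `Δⁿ(a,b)` where the first `k` coordinates are at most `c` and the remaining ones
at least `c`. The inequalities are weak, so that the pieces are closed and exactly products of
simplices; they overlap in null sets. -/
def simplexPiece (n k : ℕ) (a c b : ℝ) : Set (Fin n → ℝ) :=
  {t | t ∈ simplex n a b ∧ ∀ i : Fin n, ((i : ℕ) < k → t i ≤ c) ∧ (k ≤ (i : ℕ) → c ≤ t i)}

lemma isClosed_simplex (n : ℕ) (a b : ℝ) : IsClosed (simplex n a b) := by
  have h : simplex n a b = {t | ∀ i j : Fin n, i ≤ j → t i ≤ t j} ∩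
      Set.univ.pi fun _ => Set.Icc a b := by
    ext t
    exact and_congr Iff.rfl (by simp only [Set.mem_pi, Set.mem_univ, true_imp_iff])
  rw [h]
  refine IsClosed.inter ?_ (isClosed_set_pi fun _ _ => isClosed_Icc)
  simp only [Set.ofPred_forall]
  exact isClosed_iInter fun i => isClosed_iInter fun j => isClosed_iInter fun _ =>
    isClosed_le (continuous_apply i) (continuous_apply j)

lemma isCompact_simplex (n : ℕ) (a b : ℝ) : IsCompact (simplex n a b) :=
  (isCompact_univ_pi fun _ : Fin n => isCompact_Icc (a := a) (b := b)).of_isClosed_subset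
    (isClosed_simplex n a b) fun _ ht i _ => ht.2 i

lemma isClosed_simplexPiece (n k : ℕ) (a c b : ℝ) : IsClosed (simplexPiece n k a c b) := by
  have h : simplexPiece n k a c b = simplex n a b ∩
      {t | ∀ i : Fin n, ((i : ℕ) < k → t i ≤ c) ∧ (k ≤ (i : ℕ) → c ≤ t i)} := rfl
  rw [h]
  refine (isClosed_simplex n a b).inter ?_
  simp only [Set.ofPred_forall, Set.ofPred_and]
  exact isClosed_iInter fun i =>
    (isClosed_iInter fun _ => isClosed_le (continuous_apply i) continuous_const).inter
    (isClosed_iInter fun _ => isClosed_le continuous_const (continuous_apply i))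

lemma iUnion_simplexPiece (n : ℕ) (a c b : ℝ) :
    ⋃ k : Fin (n + 1), simplexPiece n k a c b = simplex n a b := by
  classical
  ext t
  simp only [Set.mem_iUnion]
  refine ⟨fun ⟨_, h⟩ => h.1, fun ht => ?_⟩
  -- The least `k` beyond which all coordinates are at least `c` selects the piece containing `t`.
  have hex : ∃ k, ∀ i : Fin n, k ≤ (i : ℕ) → c ≤ t i :=
    ⟨n, fun i hi => absurd i.2 (not_lt.2 hi)⟩
  have hle : Nat.find hex ≤ n := Nat.find_min' hex fun i hi => absurd i.2 (not_lt.2 hi)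
  refine ⟨⟨Nat.find hex, Nat.lt_succ_of_le hle⟩, ht, fun i => ⟨fun hi => ?_, Nat.find_spec hex i⟩⟩
  have hmin := Nat.find_min hex hi
  push Not at hmin
  obtain ⟨j, hij, hj⟩ := hmin
  exact (ht.1 hij).trans hj.le

lemma aedisjoint_simplexPiece_of_lt {n k l : ℕ} (hkl : k < l) (hl : l ≤ n) (a c b : ℝ) :
    AEDisjoint volume (simplexPiece n k a c b) (simplexPiece n l a c b) := by
  refine measure_mono_null (t := {t : Fin n → ℝ | t ⟨k, hkl.trans_le hl⟩ = c}) ?_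
    (by rw [volume_pi]; exact Measure.pi_hyperplane (α := fun _ : Fin n => ℝ) _ _ c)
  rintro t ⟨h1, h2⟩
  exact le_antisymm ((h2.2 _).1 hkl) ((h1.2 ⟨k, hkl.trans_le hl⟩).2 le_rfl)

lemma aedisjoint_simplexPiece (n : ℕ) (a c b : ℝ) :
    Pairwise (Function.onFun (AEDisjoint volume)
      fun k : Fin (n + 1) => simplexPiece n k a c b) := by
  intro k l hkl
  rcases lt_or_gt_of_ne hkl with h | h
  · exact aedisjoint_simplexPiece_of_lt h (Nat.lt_succ_iff.1 l.2) a c b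
  · exact (aedisjoint_simplexPiece_of_lt h (Nat.lt_succ_iff.1 k.2) a c b).symm

/-- Splitting the coordinates of `ℝᵏ⁺ᵐ` into the first `k` and the last `m`. -/
def splitCoords (k m : ℕ) : (Fin (k + m) → ℝ) ≃ᵐ (Fin k → ℝ) × (Fin m → ℝ) :=
  (MeasurableEquiv.piCongrLeft (fun _ => ℝ) finSumFinEquiv).symm.trans
    (MeasurableEquiv.sumPiEquivProdPi fun _ => ℝ)

lemma splitCoords_apply (k m : ℕ) (t : Fin (k + m) → ℝ) :
    splitCoords k m t = (fun i => t (Fin.castAdd m i), fun j => t (Fin.natAdd k j)) := rfl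

lemma measurePreserving_splitCoords (k m : ℕ) :
    MeasurePreserving (splitCoords k m) volume volume :=
  (volume_measurePreserving_sumPiEquivProdPi fun _ => ℝ).comp
    (volume_measurePreserving_piCongrLeft (fun _ => ℝ) finSumFinEquiv).symm

lemma splitCoords_preimage {a c b : ℝ} (hac : a ≤ c) (hcb : c ≤ b) (k m : ℕ) :
    splitCoords k m ⁻¹' (simplex k a c ×ˢ simplex m c b) = simplexPiece (k + m) k a c b := by
  ext t
  rw [Set.mem_preimage, splitCoords_apply, Set.mem_prod]
  constructor
  · rintro ⟨⟨hm1, h1⟩, hm2, h2⟩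
    refine ⟨⟨fun i j hij => ?_, fun i => ?_⟩, fun i => ?_⟩
    · induction i using Fin.addCases with
      | left i =>
        induction j using Fin.addCases with
        | left j => exact hm1 (show i ≤ j from hij)
        | right j => exact (h1 i).2.trans (h2 j).1
      | right i =>
        induction j using Fin.addCases with
        | left j =>
          simp only [Fin.le_def, Fin.val_natAdd, Fin.val_castAdd] at hij
          omega
        | right j => exact hm2 (show i ≤ j from Nat.le_of_add_le_add_left (Fin.le_def.1 hij))
    · induction i using Fin.addCases with
      | left i => exact ⟨(h1 i).1, (h1 i).2.trans hcb⟩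
      | right i => exact ⟨hac.trans (h2 i).1, (h2 i).2⟩
    · induction i using Fin.addCases with
      | left i => exact ⟨fun _ => (h1 i).2, fun h => absurd i.2 (not_lt.2 (by simpa using h))⟩
      | right i => exact ⟨fun h => by simp at h, fun _ => (h2 i).1⟩
  · rintro ⟨⟨hm, h⟩, hc⟩
    refine ⟨⟨fun i j hij => hm (show Fin.castAdd m i ≤ Fin.castAdd m j from hij), fun i => ⟨(h _).1, ?_⟩⟩,
      fun i j hij => hm (show Fin.natAdd k i ≤ Fin.natAdd k j from Nat.add_le_add_left hij k),
      fun i => ⟨?_, (h _).2⟩⟩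
    · exact (hc _).1 (by simp)
    · exact (hc _).2 (by simp)

lemma integral_simplexPiece {a c b : ℝ} (hac : a ≤ c) (hcb : c ≤ b) (k m : ℕ)
    (f : ℕ → ℝ → ℂ) :
    ∫ t in simplexPiece (k + m) k a c b, ∏ i : Fin (k + m), f i (t i) =
      iterInt k (fun i => f i) a c * iterInt m (fun j => f (k + j)) c b := by
  unfold iterInt
  rw [← setIntegral_prod_mul, ← splitCoords_preimage hac hcb, ← Measure.volume_eq_prod,
    ← (measurePreserving_splitCoords k m).setIntegral_preimage_emb
      (splitCoords k m).measurableEmbedding]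
  simp only [splitCoords_apply, Fin.prod_univ_add, Fin.val_castAdd, Fin.val_natAdd]

/-- Path composition formula for iterated integrals:
`I(f₁,…,fₙ;a,b) = Σ_{k=0}^{n} I(f₁,…,f_k;a,c) ⬝ I(f_{k+1},…,fₙ;c,b)`. -/
theorem iterInt_path_composition (a c b : ℝ) (hac : a ≤ c) (hcb : c ≤ b)
    (n : ℕ) (f : ℕ → ℝ → ℂ)
    (hf : ∀ i < n, ContinuousOn (f i) (Set.Icc a b)) :
    iterInt n (fun i => f i) a b =
      ∑ k ∈ Finset.range (n + 1),
        iterInt k (fun i => f i) a c * iterInt (n - k) (fun j => f (k + j)) c b := by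
  have hint : IntegrableOn (fun t : Fin n → ℝ => ∏ i : Fin n, f i (t i)) (simplex n a b) := by
    refine ContinuousOn.integrableOn_compact (isCompact_simplex n a b) ?_
    exact continuousOn_finsetProd _ fun i _ =>
      (hf i i.2).comp (continuous_apply i).continuousOn fun t ht => ht.2 i
  rw [← iUnion_simplexPiece n a c b] at hint
  rw [iterInt, ← iUnion_simplexPiece n a c b,
    integral_iUnion_ae (s := fun k : Fin (n + 1) => simplexPiece n k a c b)
      (fun k => (isClosed_simplexPiece n k a c b).measurableSet.nullMeasurableSet)
      (aedisjoint_simplexPiece n a c b) hint,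
    tsum_fintype, Finset.sum_range]
  refine Finset.sum_congr rfl fun k _ => ?_
  obtain ⟨m, hm⟩ := Nat.exists_eq_add_of_le (Nat.lt_succ_iff.1 k.2)
  generalize (k : ℕ) = l at hm
  subst hm
  rw [Nat.add_sub_cancel_left]
  exact integral_simplexPiece hac hcb l m f
end

section
/- Convergence of iterated integrals under the endpoint condition (the convergence assertion used in the computation of the Hodge realization, where a₀ ≠ a₁ and aₙ ≠ a_{n+1} are assumed): Let a < b be real numbers and let s₁,…,sₙ ∈ ℂ be such that no sᵢ is a real number lying strictly between a and b, s₁ ≠ a, and sₙ ≠ b. Then the function (t₁,…,tₙ) ↦ ∏_{i=1}^n 1/(tᵢ − sᵢ) is Lebesgue-integrable on the simplex Δⁿ(a,b). -/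
/-!
The integrand is dominated on the simplex by a constant times `∏ᵢ w(tᵢ)`, where
`w(t) = ((t - a)(b - t)) ^ (1/n - 1)` is integrable on `(a, b)`; the product is then integrable on
the cube `[a, b]ⁿ`, hence on the simplex.

For the domination, `norm_factor_le` bounds the `i`-th factor by a constant times
`(tᵢ - a)⁻¹ (b - tᵢ)⁻¹`, with `(t₁ - a)⁻¹` omitted for `i = 1` and `(b - tₙ)⁻¹` omitted for `i = n`,
which is what the endpoint conditions allow. Since `t₁ - a` is the smallest of the `tᵢ - a`, it is
at most their geometric mean, so `∏_{i ≠ 1} (tᵢ - a)⁻¹ ≤ ∏ᵢ (tᵢ - a) ^ (1/n - 1)`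
(`prod_inv_le_prod_rpow`); likewise at `b`. Thus the one missing pole lowers the exponent of all
poles below the critical value.
-/

open MeasureTheory

/-- A factor `1/(t - s)` with `s` outside the open interval is dominated, up to a constant,
by `(t - a)⁻¹ (b - t)⁻¹`,
and the pole at `a` (resp. `b`) may be left out of the bound when `s ≠ a` (resp. `s ≠ b`):
`P` and `Q` record which poles are kept. -/
lemma norm_factor_le {a b : ℝ} (hab : a < b) (s : ℂ)
    (hmid : ∀ x : ℝ, a < x → x < b → s ≠ (x : ℂ)) (P Q : Prop) [Decidable P] [Decidable Q]
    (hP : s = a → P) (hQ : s = b → Q) :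
    ∃ C : ℝ, 0 ≤ C ∧ ∀ t : ℝ, a < t → t < b →
      ‖1 / ((t : ℂ) - s)‖ ≤
        C * ((if P then (t - a)⁻¹ else 1) * (if Q then (b - t)⁻¹ else 1)) := by
  have hL : 0 < b - a := sub_pos.2 hab
  set κ : ℝ := min 1 (b - a)⁻¹ with hκ
  have hκ0 : 0 < κ := lt_min one_pos (inv_pos.2 hL)
  have hp : ∀ t : ℝ, a < t → t < b → κ ≤ if P then (t - a)⁻¹ else 1 := by
    intro t h1 h2
    split_ifs
    · exact (min_le_right _ _).trans (inv_anti₀ (by linarith) (by linarith))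
    · exact min_le_left _ _
  have hq : ∀ t : ℝ, a < t → t < b → κ ≤ if Q then (b - t)⁻¹ else 1 := by
    intro t h1 h2
    split_ifs
    · exact (min_le_right _ _).trans (inv_anti₀ (by linarith) (by linarith))
    · exact min_le_left _ _
  by_cases hsa : s = a
  · refine ⟨κ⁻¹, by positivity, fun t h1 h2 => ?_⟩
    have hn : ‖1 / ((t : ℂ) - s)‖ = (t - a)⁻¹ := by
      rw [hsa, ← Complex.ofReal_sub, norm_div, norm_one, Complex.norm_real, Real.norm_eq_abs,
        abs_of_pos (by linarith), one_div]
    rw [hn, if_pos (hP hsa)]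
    have h3 : 0 < (t - a)⁻¹ := inv_pos.2 (by linarith)
    calc (t - a)⁻¹ = κ⁻¹ * ((t - a)⁻¹ * κ) := by field_simp
      _ ≤ _ := by gcongr; exact hq t h1 h2
  by_cases hsb : s = b
  · refine ⟨κ⁻¹, by positivity, fun t h1 h2 => ?_⟩
    have hn : ‖1 / ((t : ℂ) - s)‖ = (b - t)⁻¹ := by
      rw [hsb, ← Complex.ofReal_sub, norm_div, norm_one, Complex.norm_real, Real.norm_eq_abs,
        abs_sub_comm, abs_of_pos (by linarith), one_div]
    rw [hn, if_pos (hQ hsb)]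
    have h3 : 0 < (b - t)⁻¹ := inv_pos.2 (by linarith)
    calc (b - t)⁻¹ = κ⁻¹ * (κ * (b - t)⁻¹) := by field_simp
      _ ≤ _ := by gcongr; exact hp t h1 h2
  -- Here `s` is off the compact segment `[a, b]`, so the factor is bounded there.
  have hcont : ContinuousOn (fun t : ℝ => 1 / ((t : ℂ) - s)) (Set.Icc a b) := by
    refine ContinuousOn.div continuousOn_const (by fun_prop) fun t ht h => ?_
    have hst : s = t := (sub_eq_zero.1 h).symm
    rcases eq_or_lt_of_le ht.1 with h1 | h1
    · exact hsa (h1 ▸ hst)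
    rcases eq_or_lt_of_le ht.2 with h2 | h2
    · exact hsb (h2 ▸ hst)
    exact hmid t h1 h2 hst
  obtain ⟨C, hC⟩ := isCompact_Icc.exists_bound_of_continuousOn hcont
  have hC0 : 0 ≤ C := (norm_nonneg _).trans (hC a ⟨le_rfl, hab.le⟩)
  refine ⟨C * (κ⁻¹ * κ⁻¹), by positivity, fun t h1 h2 => (hC t ⟨h1.le, h2.le⟩).trans ?_⟩
  calc C = C * (κ⁻¹ * κ⁻¹) * (κ * κ) := by field_simp
    _ ≤ _ := by
      gcongr
      · exact hp t h1 h2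
      · exact hq t h1 h2

lemma integrableOn_weight {a b r : ℝ} (hab : a < b) (hr : -1 < r) (hr0 : r ≤ 0) :
    IntegrableOn (fun t : ℝ => (t - a) ^ r * (b - t) ^ r) (Set.Ioo a b) := by
  have h1 : IntegrableOn (fun t : ℝ => (t - a) ^ r) (Set.Ioo a b) := by
    have h := (intervalIntegral.intervalIntegrable_rpow' (a := 0) (b := b - a) hr).comp_sub_right a
    rw [zero_add, sub_add_cancel, intervalIntegrable_iff_integrableOn_Ioo_of_le hab.le] at h
    exact h
  have h2 : IntegrableOn (fun t : ℝ => (b - t) ^ r) (Set.Ioo a b) := by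
    have h := (intervalIntegral.intervalIntegrable_rpow' (a := b - a) (b := 0) hr).comp_sub_left b
    rw [sub_zero, sub_sub_cancel, intervalIntegrable_iff_integrableOn_Ioo_of_le hab.le] at h
    exact h
  refine Integrable.mono' ((h1.add h2).const_mul (((b - a) / 2) ^ r))
    (Measurable.aestronglyMeasurable (by fun_prop)) ?_
  refine ae_restrict_of_forall_mem measurableSet_Ioo fun t ht => ?_
  have hx : 0 < t - a := sub_pos.2 ht.1
  have hy : 0 < b - t := sub_pos.2 ht.2
  have hL : 0 < (b - a) / 2 := by linarith
  have hxr := Real.rpow_pos_of_pos hx r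
  have hyr := Real.rpow_pos_of_pos hy r
  have hLr := Real.rpow_pos_of_pos hL r
  rw [Real.norm_of_nonneg (by positivity)]
  simp only [Pi.add_apply]
  -- One of the two distances to the endpoints is at least half the length.
  rcases le_total ((b - a) / 2) (t - a) with h | h
  · have := Real.rpow_le_rpow_of_nonpos hL h hr0
    nlinarith
  · have := Real.rpow_le_rpow_of_nonpos hL (show (b - a) / 2 ≤ b - t by linarith) hr0
    nlinarith

/-- The minimum `x k` is at most the geometric mean; rearranged, the pole in the `k`-th variable
can be spread evenly over all variables. -/
lemma prod_inv_le_prod_rpow {n : ℕ} (x : Fin n → ℝ) (k : Fin n) (hk : 0 < x k)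
    (hx : ∀ i, x k ≤ x i) :
    ∏ i, (if i ≠ k then (x i)⁻¹ else 1) ≤ ∏ i, (x i) ^ ((n : ℝ)⁻¹ - 1) := by
  have hn : (n : ℝ) ≠ 0 := by
    have := k.pos
    positivity
  have hpos : ∀ i, 0 < x i := fun i => hk.trans_le (hx i)
  have h1 : ∏ i, (if i ≠ k then (x i)⁻¹ else 1) = x k * ∏ i, (x i)⁻¹ := by
    have : ∀ i, (if i ≠ k then (x i)⁻¹ else 1) = (if i = k then x i else 1) * (x i)⁻¹ := by
      intro i
      by_cases h : i = k
      · simp [h, hk.ne']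
      · simp [h]
    rw [Finset.prod_congr rfl fun i _ => this i, Finset.prod_mul_distrib]
    simp
  have h2 : ∏ i, (x i) ^ ((n : ℝ)⁻¹ - 1) = (∏ i, (x i) ^ (n : ℝ)⁻¹) * ∏ i, (x i)⁻¹ := by
    rw [← Finset.prod_mul_distrib]
    refine Finset.prod_congr rfl fun i _ => ?_
    rw [Real.rpow_sub_one (hpos i).ne', div_eq_mul_inv]
  rw [h1, h2]
  refine mul_le_mul_of_nonneg_right ?_ (Finset.prod_nonneg fun i _ => (inv_pos.2 (hpos i)).le)
  calc x k = ∏ _i : Fin n, (x k) ^ (n : ℝ)⁻¹ := by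
        rw [Finset.prod_const, Finset.card_univ, Fintype.card_fin, ← Real.rpow_natCast,
          ← Real.rpow_mul hk.le, inv_mul_cancel₀ hn, Real.rpow_one]
    _ ≤ _ := by
        refine Finset.prod_le_prod (fun i _ => by positivity) fun i _ => ?_
        exact Real.rpow_le_rpow hk.le (hx i) (by positivity)

/-- Convergence of the iterated integral under the endpoint condition: if no `sᵢ` is a real
number strictly between `a` and `b`, `s₁ ≠ a` and `sₙ ≠ b`, then
`(t₁,…,tₙ) ↦ ∏ᵢ 1/(tᵢ − sᵢ)` is Lebesgue-integrable on `Δⁿ(a,b)`. -/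
theorem integrableOn_simplex_of_endpoints (a b : ℝ) (hab : a < b) (n : ℕ)
    (s : Fin n → ℂ)
    (hmid : ∀ i, ∀ x : ℝ, a < x → x < b → s i ≠ (x : ℂ))
    (hfirst : ∀ h : 0 < n, s ⟨0, h⟩ ≠ (a : ℂ))
    (hlast : ∀ h : 0 < n, s ⟨n - 1, by omega⟩ ≠ (b : ℂ)) :
    IntegrableOn (fun t : Fin n → ℝ => ∏ i, 1 / ((t i : ℂ) - s i))
      (simplex n a b) := by
  rcases Nat.eq_zero_or_pos n with rfl | hn
  · have : IsFiniteMeasure (volume : Measure (Fin 0 → ℝ)) := by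
      rw [volume_pi, Measure.pi_of_empty]
      infer_instance
    simp
  set k : Fin n := ⟨0, hn⟩ with hk
  set l : Fin n := ⟨n - 1, by omega⟩ with hl
  choose C hC0 hC using fun i => norm_factor_le hab (s i) (hmid i) (i ≠ k) (i ≠ l)
    (fun h hi => hfirst hn (by rw [← hk, ← hi]; exact h))
    (fun h hi => hlast hn (by rw [← hl, ← hi]; exact h))
  set r : ℝ := (n : ℝ)⁻¹ - 1 with hr
  have hn1 : (1 : ℝ) ≤ n := by exact_mod_cast hn
  have hr1 : -1 < r := by
    have : (0 : ℝ) < (n : ℝ)⁻¹ := by positivity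
    linarith
  have hr0 : r ≤ 0 := by
    have : (n : ℝ)⁻¹ ≤ 1 := inv_le_one_of_one_le₀ hn1
    linarith
  have hw : IntegrableOn (fun t : ℝ => (t - a) ^ r * (b - t) ^ r) (Set.Icc a b) :=
    (integrableOn_Icc_iff_integrableOn_Ioo).2 (integrableOn_weight hab hr1 hr0)
  have hprod : IntegrableOn (fun t : Fin n → ℝ => ∏ i, ((t i - a) ^ r * (b - t i) ^ r))
      (simplex n a b) := by
    have h : Integrable (fun t : Fin n → ℝ => ∏ i, ((t i - a) ^ r * (b - t i) ^ r))
        (Measure.pi fun _ => volume.restrict (Set.Icc a b)) :=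
      Integrable.fintype_prod fun _ => hw
    rw [← Measure.restrict_pi_pi] at h
    exact IntegrableOn.mono_set h fun t ht i _ => ht.2 i
  refine Integrable.mono' (hprod.const_mul (∏ i, C i))
    (Measurable.aestronglyMeasurable (by fun_prop)) ?_
  -- The faces `tᵢ = a` and `tᵢ = b`, where the bound may fail, form a null set.
  have hne : ∀ᵐ t : Fin n → ℝ, ∀ i, t i ≠ a ∧ t i ≠ b := by
    refine ae_all_iff.2 fun i => ?_
    have h := fun x : ℝ => Measure.ae_eval_ne (fun _ : Fin n => (volume : Measure ℝ)) i x
    exact (h a).and (h b)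
  filter_upwards [ae_restrict_of_ae hne,
    ae_restrict_mem (isClosed_simplex n a b).measurableSet] with t ht hmem
  have ha : ∀ i, a < t i := fun i => lt_of_le_of_ne (hmem.2 i).1 (ht i).1.symm
  have hb : ∀ i, t i < b := fun i => lt_of_le_of_ne (hmem.2 i).2 (ht i).2
  have hA := prod_inv_le_prod_rpow (fun i => t i - a) k (sub_pos.2 (ha k)) fun i =>
    sub_le_sub_right (hmem.1 (Fin.mk_le_of_le_val (Nat.zero_le _))) a
  have hB := prod_inv_le_prod_rpow (fun i => b - t i) l (sub_pos.2 (hb l)) fun i =>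
    sub_le_sub_left (hmem.1 (Fin.le_def.2 (Nat.le_sub_one_of_lt i.2))) b
  rw [norm_prod]
  refine (Finset.prod_le_prod (fun i _ => norm_nonneg _)
    fun i _ => hC i (t i) (ha i) (hb i)).trans ?_
  rw [Finset.prod_mul_distrib, Finset.prod_mul_distrib, Finset.prod_mul_distrib]
  refine mul_le_mul_of_nonneg_left ?_ (Finset.prod_nonneg fun i _ => hC0 i)
  refine mul_le_mul hA hB ?_ ?_
  · refine Finset.prod_nonneg fun i _ => ?_
    have := sub_pos.2 (hb i)
    split_ifs <;> positivity
  · refine Finset.prod_nonneg fun i _ => ?_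
    have := sub_pos.2 (ha i)
    positivity
end

section
/- The weight-two double logarithm identity: For every real z with 0 < z < 1, ∫_{Δ²(0,z)} 1/((1−t₁)(1−t₂)) dt₁ dt₂ = Σ_{0<j<k} z^k/(j·k) = (1/2)·(log(1−z))². -/
/-!
Write `L = -log (1 - z)`; both the integral and the series equal `L ^ 2 / 2`.

For the integral, Fubini applies on the compact triangle `0 ≤ t₁ ≤ t₂ ≤ z`: the inner integral over
`t₁` is `-log (1 - t₂)`, and `-log (1 - t₂) / (1 - t₂)` has the primitive `log (1 - t₂) ^ 2 / 2`.

For the series, square `L = ∑_{a ≥ 1} z ^ a / a` and use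
`1 / (a * b) = 1 / (a * (a + b)) + 1 / (b * (a + b))`. The two resulting double series agree by the
symmetry `a ↔ b`, and with `j = a`, `k = a + b` each is `∑_{0 < j < k} z ^ k / (j * k)`.
-/

open MeasureTheory

lemma integral_one_div_one_sub (y : ℝ) (h0 : 0 ≤ y) (h1 : y < 1) :
    ∫ x in (0 : ℝ)..y, 1 / (1 - x) = -Real.log (1 - y) := by
  have hne : ∀ x ∈ Set.uIcc 0 y, 1 - x ≠ 0 := by
    intro x hx
    rw [Set.uIcc_of_le h0] at hx
    linarith [hx.2]
  rw [intervalIntegral.integral_eq_sub_of_hasDerivAt (f := fun x => -Real.log (1 - x))]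
  · simp
  · intro x hx
    have h := (((hasDerivAt_id' x).const_sub 1).log (hne x hx)).fun_neg
    rwa [neg_div, neg_neg] at h
  · exact (ContinuousOn.div (by fun_prop) (by fun_prop) hne).intervalIntegrable

lemma integral_neg_log_div_one_sub (z : ℝ) (h0 : 0 ≤ z) (h1 : z < 1) :
    ∫ y in (0 : ℝ)..z, -Real.log (1 - y) / (1 - y) = (1 / 2) * Real.log (1 - z) ^ 2 := by
  have hne : ∀ x ∈ Set.uIcc 0 z, 1 - x ≠ 0 := by
    intro x hx
    rw [Set.uIcc_of_le h0] at hx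
    linarith [hx.2]
  rw [intervalIntegral.integral_eq_sub_of_hasDerivAt (f := fun x => (1 / 2) * Real.log (1 - x) ^ 2)]
  · simp
  · intro x hx
    have h := ((((hasDerivAt_id' x).const_sub 1).log (hne x hx)).fun_pow 2).const_mul (1 / 2 : ℝ)
    refine h.congr_deriv ?_
    push_cast
    ring
  · refine (ContinuousOn.div ?_ (by fun_prop) hne).intervalIntegrable
    exact (ContinuousOn.log (by fun_prop) hne).neg

/-- The planar triangle `0 ≤ t₁ ≤ t₂ ≤ z`, that is `simplex 2 0 z` seen inside `ℝ × ℝ`. -/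
def triangle (z : ℝ) : Set (ℝ × ℝ) := {p | 0 ≤ p.1 ∧ p.1 ≤ p.2 ∧ p.2 ≤ z}

lemma isCompact_triangle (z : ℝ) : IsCompact (triangle z) := by
  refine (isCompact_Icc (a := ((0 : ℝ), (0 : ℝ))) (b := (z, z))).of_isClosed_subset ?_ ?_
  · exact (isClosed_le continuous_const continuous_fst).inter
      ((isClosed_le continuous_fst continuous_snd).inter
        (isClosed_le continuous_snd continuous_const))
  · rintro ⟨a, b⟩ ⟨h1, h2, h3⟩
    dsimp only at h1 h2 h3
    exact ⟨⟨h1, h1.trans h2⟩, ⟨h2.trans h3, h3⟩⟩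

lemma integral_simplex_two (z : ℝ) (F : ℝ × ℝ → ℝ) :
    ∫ t in simplex 2 0 z, F (t 0, t 1) = ∫ p in triangle z, F p := by
  rw [← (volume_preserving_finTwoArrow ℝ).setIntegral_preimage_emb
    (MeasurableEquiv.measurableEmbedding _)]
  have hS : simplex 2 0 z = MeasurableEquiv.finTwoArrow ⁻¹' triangle z := by
    ext t
    simp only [simplex, triangle, Set.mem_preimage, Set.mem_ofPred_eq, Set.mem_Icc,
      Fin.forall_fin_two, MeasurableEquiv.finTwoArrow_apply]
    constructor
    · rintro ⟨hm, ⟨h0, -⟩, -, h1⟩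
      exact ⟨h0, hm (by simp), h1⟩
    · rintro ⟨h0, h01, h1⟩
      refine ⟨?_, ⟨h0, h01.trans h1⟩, h0.trans h01, h1⟩
      rw [Fin.monotone_iff_le_succ]
      simpa using h01
  rw [hS]
  rfl

lemma integral_triangle (z : ℝ) (hz0 : 0 < z) (hz1 : z < 1) :
    ∫ p in triangle z, 1 / ((1 - p.1) * (1 - p.2)) = (1 / 2) * Real.log (1 - z) ^ 2 := by
  have hmeas : MeasurableSet (triangle z) := (isCompact_triangle z).measurableSet
  have hint : IntegrableOn (fun p : ℝ × ℝ => 1 / ((1 - p.1) * (1 - p.2))) (triangle z) := by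
    refine ContinuousOn.integrableOn_compact (isCompact_triangle z) ?_
    refine ContinuousOn.div (by fun_prop) (by fun_prop) ?_
    rintro ⟨a, b⟩ ⟨h1, h2, h3⟩
    dsimp only at h1 h2 h3
    exact mul_ne_zero (by linarith) (by linarith)
  rw [← integral_indicator hmeas, Measure.volume_eq_prod, integral_prod_symm]
  swap
  · rw [← Measure.volume_eq_prod]
    exact (integrable_indicator_iff hmeas).2 hint
  have inner : ∀ y : ℝ, (∫ x, (triangle z).indicator
      (fun p : ℝ × ℝ => 1 / ((1 - p.1) * (1 - p.2))) (x, y)) =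
      (Set.Icc 0 z).indicator (fun y => -Real.log (1 - y) / (1 - y)) y := by
    intro y
    by_cases hy : y ∈ Set.Icc 0 z
    · have : (fun x => (triangle z).indicator
          (fun p : ℝ × ℝ => 1 / ((1 - p.1) * (1 - p.2))) (x, y)) =
          (Set.Icc 0 y).indicator (fun x => 1 / (1 - x) * (1 / (1 - y))) := by
        funext x
        have hiff : (x, y) ∈ triangle z ↔ x ∈ Set.Icc 0 y := by
          simp [triangle, hy.2]
        by_cases hx : x ∈ Set.Icc 0 y
        · rw [Set.indicator_of_mem hx, Set.indicator_of_mem (hiff.2 hx), one_div_mul_one_div]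
        · rw [Set.indicator_of_notMem hx, Set.indicator_of_notMem (fun h => hx (hiff.1 h))]
      rw [this, integral_indicator measurableSet_Icc, integral_Icc_eq_integral_Ioc,
        ← intervalIntegral.integral_of_le hy.1, intervalIntegral.integral_mul_const,
        integral_one_div_one_sub y hy.1 (hy.2.trans_lt hz1), Set.indicator_of_mem hy,
        mul_one_div]
    · rw [Set.indicator_of_notMem hy]
      refine integral_eq_zero_of_ae (Filter.Eventually.of_forall fun x => ?_)
      refine Set.indicator_of_notMem ?_ _
      rintro ⟨h1, h2, h3⟩
      exact hy ⟨h1.trans h2, h3⟩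
  simp_rw [inner]
  rw [integral_indicator measurableSet_Icc, integral_Icc_eq_integral_Ioc,
    ← intervalIntegral.integral_of_le hz0.le, integral_neg_log_div_one_sub z hz0.le hz1]

lemma tsum_double_log (z : ℝ) (hz0 : 0 < z) (hz1 : z < 1) :
    (∑' jk : ℕ × ℕ,
      if 0 < jk.1 ∧ jk.1 < jk.2 then z ^ jk.2 / ((jk.1 : ℝ) * (jk.2 : ℝ)) else 0) =
      (1 / 2) * Real.log (1 - z) ^ 2 := by
  have hL : HasSum (fun n : ℕ => z ^ (n + 1) / ((n : ℝ) + 1)) (-Real.log (1 - z)) :=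
    Real.hasSum_pow_div_log_of_abs_lt_one (by rwa [abs_of_pos hz0])
  have hLs : Summable fun n : ℕ => ‖z ^ (n + 1) / ((n : ℝ) + 1)‖ := hL.summable.norm
  -- The indices are shifted: `p = (a - 1, b - 1)`.
  let f : ℕ × ℕ → ℝ := fun p => z ^ (p.1 + 1) / ((p.1 : ℝ) + 1) * (z ^ (p.2 + 1) / ((p.2 : ℝ) + 1))
  let g : ℕ × ℕ → ℝ := fun p => z ^ (p.1 + p.2 + 2) / (((p.1 : ℝ) + 1) * ((p.1 : ℝ) + p.2 + 2))
  have hf : Summable f := summable_mul_of_summable_norm hLs hLs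
  have hft : ∑' p, f p = Real.log (1 - z) ^ 2 := by
    rw [← tsum_mul_tsum_of_summable_norm hLs hLs, hL.tsum_eq]
    ring
  have hfg : ∀ p, f p = g p + g p.swap := by
    rintro ⟨a, b⟩
    simp only [f, g, Prod.swap]
    field_simp
    ring
  have hg0 : ∀ p, 0 ≤ g p := fun p => by positivity
  have hg : Summable g := hf.of_nonneg_of_le hg0 fun p => by
    rw [hfg]
    exact le_add_of_nonneg_right (hg0 _)
  have hgs : Summable fun p : ℕ × ℕ => g p.swap := hg.comp_injective Prod.swap_injective
  have hgt : ∑' p : ℕ × ℕ, g p.swap = ∑' p, g p := (Equiv.prodComm ℕ ℕ).tsum_eq g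
  have hsum : Real.log (1 - z) ^ 2 = 2 * ∑' p, g p := by
    rw [← hft, tsum_congr hfg, hg.tsum_add hgs, hgt, two_mul]
  have hinj : Function.Injective (fun p : ℕ × ℕ => (p.1 + 1, p.1 + p.2 + 2)) := by
    rintro ⟨a, b⟩ ⟨c, d⟩ h
    simp only [Prod.mk.injEq] at h ⊢
    omega
  rw [hsum, ← hinj.tsum_eq]
  · rw [one_div, inv_mul_cancel_left₀ two_ne_zero]
    refine tsum_congr fun p => ?_
    rw [if_pos (by constructor <;> dsimp only <;> omega)]
    simp only [g]
    push_cast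
    rfl
  · rintro ⟨j, k⟩ h
    rw [Function.mem_support] at h
    obtain ⟨h1, h2⟩ : 0 < j ∧ j < k := by
      by_contra hc
      exact h (if_neg hc)
    refine ⟨(j - 1, k - j - 1), ?_⟩
    simp only [Prod.mk.injEq]
    omega

/-- The weight-two double logarithm identity:
`∫_{Δ²(0,z)} dt₁dt₂/((1−t₁)(1−t₂)) = Σ_{0<j<k} z^k/(jk) = (1/2)(log(1−z))²`. -/
theorem double_log_identity (z : ℝ) (hz0 : 0 < z) (hz1 : z < 1) :
    (∫ t in simplex 2 0 z, 1 / ((1 - t 0) * (1 - t 1))) =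
      (∑' jk : ℕ × ℕ,
        if 0 < jk.1 ∧ jk.1 < jk.2 then z ^ jk.2 / ((jk.1 : ℝ) * (jk.2 : ℝ)) else 0) ∧
    (∫ t in simplex 2 0 z, 1 / ((1 - t 0) * (1 - t 1))) =
      (1 / 2) * (Real.log (1 - z)) ^ 2 := by
  have hI : (∫ t in simplex 2 0 z, 1 / ((1 - t 0) * (1 - t 1))) =
      (1 / 2) * (Real.log (1 - z)) ^ 2 :=
    (integral_simplex_two z fun p => 1 / ((1 - p.1) * (1 - p.2))).trans
      (integral_triangle z hz0 hz1)
  exact ⟨hI.trans (tsum_double_log z hz0 hz1).symm, hI⟩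
end
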